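/- Let n ≥ 1 and k ≥ 1 be integers, let R₁, …, R_{k−1} be nonnegative integers with R₁ + ⋯ + R_{k−1} ≤ n − k, set γ_v = n − v + 1 − Σ_{u=1}^{v−1} R_u for 1 ≤ v ≤ k, and let θ > 0, T > 0 and an integer i with 1 ≤ i ≤ k. Let μ be the measure on ℝ^k whose density with respect to Lebesgue measure is z ↦ 1_{0 < z₁ < ⋯ < z_k, z_k > T} · exp(−(1/θ)(Σ_{s=1}^{k−1} z_s(1 + R_s) + z_k γ_k)), and let g(z) = (Σ_{s=1}^{k−1} z_s(1 + R_s) + z_k γ_k)/i. Then the pushforward measure g_*μ has Lebesgue density x ↦ θ^k Σ_{v=0}^{k−1} [ (−1)^v e^{−(T/θ) γ_{k−v}} / ( (∏_{j=1}^{v} (γ_{k−v} − γ_{k−v+j})) (∏_{j=1}^{k−1−v} (γ_j − γ_{k−v})) · γ_{k−v} ) ] · f_G(x; Tγ_{k−v}/i, k, i/θ). (This is the conditional density of the MLE θ̂₁ = W/D₁ given T < Z_{k:m:n} < Z_{m:m:n} and D₁ = i, up to the common normalizing constant.) -/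

import Mathlib

open MeasureTheory

/-- `γ_v = n − v + 1 − Σ_{u=1}^{v−1} R_u`, the number of surviving units at the time of the
`v`-th failure in a progressive censoring scheme with removals `R 1, R 2, …`. -/
noncomputable def gam (n : ℕ) (R : ℕ → ℕ) (v : ℕ) : ℝ :=
  (n : ℝ) - v + 1 - ∑ u ∈ Finset.Icc 1 (v - 1), (R u : ℝ)

/-- `fG x a b c`: density at `x` of the shifted Gamma distribution with shift `a`,
shape `b` and rate `c`, i.e. `(c^b/Γ(b)) (x − a)^{b−1} e^{−c(x−a)}` for `x > a`. -/
noncomputable def fG (x a b c : ℝ) : ℝ :=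
  if a < x then c ^ b / Real.Gamma b * (x - a) ^ (b - 1) * Real.exp (-c * (x - a)) else 0

/-!
By Abel summation the exponent of the density is `-W / θ`, where `W = ∑ γ_s (z_s - z_{s-1})` is the
total time on test. Since the density is a function of `W` alone, it suffices to know the law of `W`
under Lebesgue measure on the ordered region, and then to multiply by `exp (-W / θ)`. Integrating
out the failure times one by one, starting with the last, shows that this law has as density a
combination of truncated powers `(x - T γ_l)₊ ^ (k - 1)`: each step integrates a truncated power in
one variable, and the coefficients recombine by the partial fraction identity for Lagrange weights.
Multiplied by the exponential, each truncated power becomes a shifted Gamma density.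
-/

/-- The truncated power `x₊ ^ m / m!`, with value `0` at `x = 0` also for `m = 0`. -/
noncomputable def truncPow (m : ℕ) (x : ℝ) : ℝ :=
  if 0 < x then x ^ m / m.factorial else 0

lemma truncPow_of_pos {m : ℕ} {x : ℝ} (hx : 0 < x) : truncPow m x = x ^ m / m.factorial :=
  if_pos hx

lemma truncPow_of_nonpos {m : ℕ} {x : ℝ} (hx : x ≤ 0) : truncPow m x = 0 :=
  if_neg hx.not_gt

lemma truncPow_nonneg (m : ℕ) (x : ℝ) : 0 ≤ truncPow m x := by
  unfold truncPow; split_ifs <;> positivity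

lemma monotone_truncPow (m : ℕ) : Monotone (truncPow m) := by
  intro x y hxy
  rcases le_or_gt x 0 with hx | hx
  · rw [truncPow_of_nonpos hx]
    exact truncPow_nonneg m y
  · rw [truncPow_of_pos hx, truncPow_of_pos (hx.trans_le hxy)]
    gcongr

@[fun_prop]
lemma measurable_truncPow (m : ℕ) : Measurable (truncPow m) :=
  (monotone_truncPow m).measurable

lemma truncPow_succ_eq_max (m : ℕ) :
    truncPow (m + 1) = fun x : ℝ => max x 0 ^ (m + 1) / ((m + 1).factorial : ℝ) := by
  ext x
  rcases le_or_gt x 0 with hx | hx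
  · simp [truncPow_of_nonpos hx, max_eq_right hx]
  · rw [truncPow_of_pos hx, max_eq_left hx.le]

lemma hasDerivAt_truncPow_succ (m : ℕ) {x : ℝ} (hx : x ≠ 0) :
    HasDerivAt (truncPow (m + 1)) (truncPow m x) x := by
  rcases hx.lt_or_gt with hneg | hpos
  · rw [truncPow_of_nonpos hneg.le]
    refine (hasDerivAt_const x (0 : ℝ)).congr_of_eventuallyEq ?_
    filter_upwards [Iio_mem_nhds hneg] with y hy using truncPow_of_nonpos hy.le
  · rw [truncPow_of_pos hpos]
    have hpow := (hasDerivAt_pow (m + 1) x).div_const ((m + 1).factorial : ℝ)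
    refine (hpow.congr_deriv ?_).congr_of_eventuallyEq ?_
    · rw [Nat.factorial_succ]
      push_cast
      field_simp
    · filter_upwards [Ioi_mem_nhds hpos] with y hy using truncPow_of_pos hy

lemma intervalIntegral_truncPow (m : ℕ) (u v : ℝ) :
    ∫ y in u..v, truncPow m y = truncPow (m + 1) v - truncPow (m + 1) u :=
  integral_eq_of_hasDerivAt_off_countable _ _ (Set.countable_singleton 0)
    (by rw [truncPow_succ_eq_max]; fun_prop) (fun _ hy => hasDerivAt_truncPow_succ m hy.2)
    (monotone_truncPow m).intervalIntegrable

lemma intervalIntegrable_truncPow_sub_mul (m : ℕ) (a b u v : ℝ) :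
    IntervalIntegrable (fun z => truncPow m (a - b * z)) volume u v := by
  rcases le_total 0 b with hb | hb
  · exact Antitone.intervalIntegrable fun y z hyz =>
      monotone_truncPow m (sub_le_sub_left (mul_le_mul_of_nonneg_left hyz hb) a)
  · exact Monotone.intervalIntegrable fun y z hyz =>
      monotone_truncPow m (sub_le_sub_left (mul_le_mul_of_nonpos_left hyz hb) a)

lemma intervalIntegral_truncPow_sub_mul (m : ℕ) (a : ℝ) {b : ℝ} (hb : b ≠ 0) (u v : ℝ) :
    ∫ z in u..v, truncPow m (a - b * z)
      = b⁻¹ * (truncPow (m + 1) (a - b * u) - truncPow (m + 1) (a - b * v)) := by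
  rw [intervalIntegral.integral_comp_sub_mul _ hb, intervalIntegral_truncPow, smul_eq_mul]

lemma integral_Ioi_truncPow_sub_mul (m : ℕ) (a : ℝ) {b : ℝ} (hb : 0 < b) (t : ℝ) :
    IntegrableOn (fun z => truncPow m (a - b * z)) (Set.Ioi t) ∧
      ∫ z in Set.Ioi t, truncPow m (a - b * z) = b⁻¹ * truncPow (m + 1) (a - b * t) := by
  set M := max t (a / b)
  have vanish_of_le : ∀ {j : ℕ} {z : ℝ}, M ≤ z → truncPow j (a - b * z) = 0 := fun hz =>
    truncPow_of_nonpos (sub_nonpos.2 ((div_le_iff₀' hb).1 ((le_max_right _ _).trans hz)))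
  have vanish_off : ∀ z ∈ Set.Ioi t \ Set.Ioc t M, truncPow m (a - b * z) = 0 := fun z hz =>
    vanish_of_le (not_le.1 fun hzM => hz.2 ⟨hz.1, hzM⟩).le
  constructor
  · exact ((intervalIntegrable_truncPow_sub_mul m a b t M).1).of_forall_sdiff_eq_zero
      measurableSet_Ioi vanish_off
  · rw [setIntegral_eq_of_subset_of_forall_sdiff_eq_zero measurableSet_Ioi
      Set.Ioc_subset_Ioi_self vanish_off, ← intervalIntegral.integral_of_le (le_max_left _ _),
      intervalIntegral_truncPow_sub_mul m a hb.ne', vanish_of_le le_rfl, sub_zero]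

/- The argument of the truncated power is affine in `z` on either side of `max t T`. -/
lemma integral_Ioi_truncPow_sub_max (m : ℕ) {G b : ℝ} (hG : 0 < G) (hGb : G ≠ b) (t T x : ℝ) :
    IntegrableOn (fun z => truncPow m (x - G * (z - t) - max (T - z) 0 * b)) (Set.Ioi t) ∧
      ∫ z in Set.Ioi t, truncPow m (x - G * (z - t) - max (T - z) 0 * b)
        = (G - b)⁻¹ * truncPow (m + 1) (x - max (T - t) 0 * b)
          + (G⁻¹ - (G - b)⁻¹) * truncPow (m + 1) (x - max (T - t) 0 * G) := by
  set f := fun z => truncPow m (x - G * (z - t) - max (T - z) 0 * b)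
  set s := max t T
  have hts : t ≤ s := le_max_left _ _
  have hs : s - t = max (T - t) 0 := by rw [← max_sub_sub_right, sub_self, max_comm]
  have eqOn_left : Set.EqOn f (fun z => truncPow m (x + G * t - s * b - (G - b) * z))
      (Set.Ioc t s) := by
    intro z hz
    have : max (T - z) 0 = s - z := by
      rcases le_max_iff.1 hz.2 with h | h
      · exact absurd hz.1 h.not_gt
      · rw [max_eq_left (sub_nonneg.2 h), show s = T from max_eq_right (hz.1.le.trans h)]
    simp only [f, this]
    ring_nf
  have eqOn_right : Set.EqOn f (fun z => truncPow m (x + G * t - G * z)) (Set.Ioi s) := by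
    intro z hz
    have : max (T - z) 0 = 0 := max_eq_right (sub_nonpos.2 ((le_max_right t T).trans hz.le))
    simp only [f, this]
    ring_nf
  have int_left : IntegrableOn f (Set.Ioc t s) :=
    (intervalIntegrable_truncPow_sub_mul m _ _ t s).1.congr_fun eqOn_left.symm measurableSet_Ioc
  obtain ⟨int_right, integral_right⟩ := integral_Ioi_truncPow_sub_mul m (x + G * t) hG s
  have int_right : IntegrableOn f (Set.Ioi s) :=
    int_right.congr_fun eqOn_right.symm measurableSet_Ioi
  rw [← Set.Ioc_union_Ioi_eq_Ioi hts]
  refine ⟨int_left.union int_right, ?_⟩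
  rw [setIntegral_union (Set.Ioc_disjoint_Ioi le_rfl) measurableSet_Ioi int_left int_right,
    setIntegral_congr_fun measurableSet_Ioc eqOn_left,
    setIntegral_congr_fun measurableSet_Ioi eqOn_right, integral_right,
    ← intervalIntegral.integral_of_le hts,
    intervalIntegral_truncPow_sub_mul m _ (sub_ne_zero.2 hGb), ← hs]
  ring_nf

section LagrangeWeights

open Lagrange

variable {F : Type*} [Field F] {n : ℕ}

lemma nodalWeight_univ_eq_prod_ite (v : Fin n → F) (l : Fin n) :
    nodalWeight Finset.univ v l = ∏ j, if j = l then 1 else (v l - v j)⁻¹ := by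
  rw [nodalWeight, ← Finset.mul_prod_erase Finset.univ _ (Finset.mem_univ l), if_pos rfl, one_mul]
  exact Finset.prod_congr rfl fun j hj => (if_neg (Finset.ne_of_mem_erase hj)).symm

lemma nodalWeight_univ_succ (v : Fin (n + 1) → F) (l : Fin n) :
    nodalWeight Finset.univ v l.succ
      = (v l.succ - v 0)⁻¹ * nodalWeight Finset.univ (Fin.tail v) l := by
  simp only [nodalWeight_univ_eq_prod_ite, Fin.prod_univ_succ, (Fin.succ_ne_zero l).symm,
    if_false, Fin.succ_inj, Fin.tail]

/- Interpolate the constant `1` at the nodes other than `v 0` and evaluate at `v 0`. -/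
lemma nodalWeight_univ_zero [NeZero n] {v : Fin (n + 1) → F} (hv : Function.Injective v) :
    nodalWeight Finset.univ v 0
      = ∑ l : Fin n, nodalWeight Finset.univ (Fin.tail v) l * (v 0 - v l.succ)⁻¹ := by
  have tail_inj : Set.InjOn (Fin.tail v) (Finset.univ : Finset (Fin n)) :=
    (hv.comp (Fin.succ_injective n)).injOn
  have interpolate_one_eval :=
    eval_interpolate_not_at_node (s := Finset.univ) (v := Fin.tail v) (x := v 0) 1
      fun j _ => hv.ne (Fin.succ_ne_zero j).symm
  rw [interpolate_one tail_inj Finset.univ_nonempty, Polynomial.eval_one, eval_nodal]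
    at interpolate_one_eval
  simp only [Pi.one_apply, mul_one, Fin.tail] at interpolate_one_eval
  rw [nodalWeight_univ_eq_prod_ite, Fin.prod_univ_succ, if_pos rfl, one_mul]
  simp only [Fin.succ_ne_zero, if_false, Finset.prod_inv_distrib]
  exact (eq_inv_of_mul_eq_one_right interpolate_one_eval.symm).symm

end LagrangeWeights

section Spacings

variable {K : ℕ}

/-- The coefficient `1 / (g l * ∏ j ≠ l, (g j - g l))` of the `l`-th truncated power in the density
of the total time on test; the minus sign on the nodes produces the differences `g j - g l`. -/
noncomputable def totalTimeCoeff (g : Fin (K + 1) → ℝ) (l : Fin (K + 1)) : ℝ :=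
  Lagrange.nodalWeight Finset.univ (-g) l / g l

/-- Lebesgue density of the total time on test on `{t < z 0 < ⋯ < z K, T < z K}` with `g s` units
under observation before the failure `z s`; it depends on `t` and `T` only through `τ = T - t`. -/
noncomputable def totalTimeDensity (g : Fin (K + 1) → ℝ) (τ x : ℝ) : ℝ :=
  ∑ l, totalTimeCoeff g l * truncPow K (x - max τ 0 * g l)

lemma totalTimeCoeff_succ (g : Fin (K + 2) → ℝ) (l : Fin (K + 1)) :
    totalTimeCoeff g l.succ = totalTimeCoeff (Fin.tail g) l * (g 0 - g l.succ)⁻¹ := by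
  rw [totalTimeCoeff, nodalWeight_univ_succ, Pi.neg_apply, Pi.neg_apply, neg_sub_neg,
    mul_comm, mul_div_right_comm]
  rfl

lemma totalTimeCoeff_zero {g : Fin (K + 2) → ℝ} (hg : ∀ s, g s ≠ 0)
    (hinj : Function.Injective g) :
    totalTimeCoeff g 0
      = ∑ l, totalTimeCoeff (Fin.tail g) l * ((g 0)⁻¹ - (g 0 - g l.succ)⁻¹) := by
  have neg_inj : Function.Injective (-g) := neg_injective.comp hinj
  rw [totalTimeCoeff, nodalWeight_univ_zero neg_inj, Finset.sum_div]
  refine Finset.sum_congr rfl fun l _ => ?_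
  have h0 := hg 0
  have hl := hg l.succ
  have hsub : g 0 - g l.succ ≠ 0 := sub_ne_zero.2 (hinj.ne (Fin.succ_ne_zero l).symm)
  have hsub_neg : -g 0 - -g l.succ = -(g 0 - g l.succ) := by ring
  change Lagrange.nodalWeight Finset.univ (-Fin.tail g) l * (-g 0 - -g l.succ)⁻¹ / g 0
    = Lagrange.nodalWeight Finset.univ (-Fin.tail g) l / g l.succ * _
  rw [hsub_neg]
  field_simp
  ring

lemma integral_totalTimeDensity_tail {g : Fin (K + 2) → ℝ} (hpos : ∀ s, 0 < g s)
    (hinj : Function.Injective g) (t T x : ℝ) :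
    IntegrableOn (fun z => totalTimeDensity (Fin.tail g) (T - z) (x - g 0 * (z - t)))
        (Set.Ioi t) ∧
      ∫ z in Set.Ioi t, totalTimeDensity (Fin.tail g) (T - z) (x - g 0 * (z - t))
        = totalTimeDensity g (T - t) x := by
  have piece (l : Fin (K + 1)) :=
    integral_Ioi_truncPow_sub_max K (hpos 0) (hinj.ne (Fin.succ_ne_zero l).symm) t T x
  have int_term (l : Fin (K + 1)) := (piece l).1.const_mul (totalTimeCoeff (Fin.tail g) l)
  refine ⟨integrable_finsetSum _ fun l _ => int_term l, ?_⟩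
  calc
    _ = ∑ l : Fin (K + 1), totalTimeCoeff (Fin.tail g) l
          * ((g 0 - g l.succ)⁻¹ * truncPow (K + 1) (x - max (T - t) 0 * g l.succ)
            + ((g 0)⁻¹ - (g 0 - g l.succ)⁻¹) * truncPow (K + 1) (x - max (T - t) 0 * g 0)) := by
      refine (integral_finsetSum _ fun l _ => int_term l).trans
        (Finset.sum_congr rfl fun l _ => ?_)
      rw [integral_const_mul, (piece l).2]
    _ = totalTimeDensity g (T - t) x := by
      rw [totalTimeDensity, Fin.sum_univ_succ (n := K + 1),
        totalTimeCoeff_zero (fun s => (hpos s).ne') hinj, Finset.sum_mul, ← Finset.sum_add_distrib]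
      refine Finset.sum_congr rfl fun l _ => ?_
      rw [totalTimeCoeff_succ]
      ring

lemma totalTimeDensity_fin_one (g : Fin 1 → ℝ) (τ x : ℝ) :
    totalTimeDensity g τ x = (g 0)⁻¹ * truncPow 0 (x - max τ 0 * g 0) := by
  simp [totalTimeDensity, totalTimeCoeff, Lagrange.nodalWeight]

lemma totalTimeDensity_nonneg {g : Fin (K + 1) → ℝ} (hpos : ∀ s, 0 < g s)
    (hinj : Function.Injective g) (τ x : ℝ) : 0 ≤ totalTimeDensity g τ x := by
  induction K generalizing τ x with
  | zero =>
    rw [totalTimeDensity_fin_one]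
    exact mul_nonneg (inv_nonneg.2 (hpos 0).le) (truncPow_nonneg _ _)
  | succ K ih =>
    rw [← sub_zero τ, ← (integral_totalTimeDensity_tail hpos hinj 0 τ x).2]
    exact integral_nonneg fun z =>
      ih (fun s => hpos s.succ) (hinj.comp (Fin.succ_injective _)) _ _

@[fun_prop]
lemma measurable_totalTimeDensity (g : Fin (K + 1) → ℝ) :
    Measurable (Function.uncurry (totalTimeDensity g)) := by
  unfold totalTimeDensity Function.uncurry
  fun_prop

end Spacings

section OrderedRegion

open scoped ENNReal

variable {K : ℕ}

lemma lintegral_mul_left_comp {c : ℝ} (hc : c ≠ 0) (f : ℝ → ℝ≥0∞) :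
    ∫⁻ x, f x = ENNReal.ofReal |c| * ∫⁻ x, f (c * x) := by
  rw [← (measurableEmbedding_mulLeft₀ hc).lintegral_map, ← smul_eq_mul,
    ← lintegral_smul_measure, Real.smul_map_volume_mul_left hc]

lemma lintegral_vecCons {α : Type*} [MeasureSpace α] [SigmaFinite (volume : Measure α)]
    {f : (Fin (K + 1) → α) → ℝ≥0∞} (hf : Measurable f) :
    ∫⁻ z, f z = ∫⁻ x, ∫⁻ y, f (Matrix.vecCons x y) := by
  have mp := (volume_preserving_piFinSuccAbove (fun _ : Fin (K + 1) => α) 0).symm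
  rw [← mp.lintegral_comp hf]
  refine (lintegral_prod _ (hf.comp mp.measurable).aemeasurable).trans ?_
  simp [MeasurableEquiv.piFinSuccAbove, Fin.insertNthEquiv, Matrix.vecCons]

/-- The failure times `t < z 0 < ⋯ < z K` with `T < z K`, for units put on test at time `t`. -/
def orderedRegion (K : ℕ) (t T : ℝ) : Set (Fin (K + 1) → ℝ) :=
  {z | StrictMono (Matrix.vecCons t z) ∧ T < z (Fin.last K)}

/-- Total time on test in the failure-time vector `z`, with starting time `t`, when `g s` units are
under observation during the spacing that ends at `z s`. -/
def totalTimeOnTest (g : Fin (K + 1) → ℝ) (t : ℝ) (z : Fin (K + 1) → ℝ) : ℝ :=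
  ∑ s, g s * (z s - Matrix.vecCons t z s.castSucc)

lemma orderedRegion_eq (t T : ℝ) :
    orderedRegion K t T = {z | StrictMono z ∧ (∀ h, t < z h) ∧ T < z (Fin.last K)} := by
  ext z
  simp only [orderedRegion, strictMono_vecCons, Set.mem_ofPred_eq]
  constructor
  · rintro ⟨⟨h0, hmono⟩, hT⟩
    exact ⟨hmono, fun h => h0.trans_le (hmono.monotone (Fin.zero_le h)), hT⟩
  · rintro ⟨hmono, hpos, hT⟩
    exact ⟨⟨hpos 0, hmono⟩, hT⟩

lemma vecCons_mem_orderedRegion (t T x : ℝ) (y : Fin (K + 1) → ℝ) :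
    Matrix.vecCons x y ∈ orderedRegion (K + 1) t T ↔ t < x ∧ y ∈ orderedRegion K x T := by
  simp only [orderedRegion, Set.mem_ofPred_eq, strictMono_vecCons (a := t), Matrix.cons_val_zero,
    ← Fin.succ_last, Matrix.cons_val_succ, and_assoc]

lemma totalTimeOnTest_vecCons (g : Fin (K + 2) → ℝ) (t x : ℝ) (y : Fin (K + 1) → ℝ) :
    totalTimeOnTest g t (Matrix.vecCons x y)
      = totalTimeOnTest (Fin.tail g) x y + g 0 * (x - t) := by
  rw [totalTimeOnTest, Fin.sum_univ_succ, add_comm]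
  simp [totalTimeOnTest, Fin.tail]

@[fun_prop]
lemma measurable_vecCons {α : Type*} [MeasurableSpace α] {n : ℕ} (t : α) :
    Measurable (Matrix.vecCons t : (Fin n → α) → Fin (n + 1) → α) := by
  refine measurable_pi_iff.2 fun s => ?_
  cases s using Fin.cases <;> simp only [Matrix.cons_val_zero, Matrix.cons_val_succ] <;> fun_prop

lemma measurableSet_orderedRegion (t T : ℝ) : MeasurableSet (orderedRegion K t T) := by
  simp only [orderedRegion, Fin.strictMono_iff_lt_succ, Set.ofPred_and, Set.ofPred_forall]
  exact (MeasurableSet.iInter fun s => measurableSet_lt (by fun_prop) (by fun_prop)).inter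
    (measurableSet_lt (by fun_prop) (by fun_prop))

@[fun_prop]
lemma measurable_totalTimeOnTest (g : Fin (K + 1) → ℝ) (t : ℝ) :
    Measurable (totalTimeOnTest g t) := by
  unfold totalTimeOnTest
  fun_prop

lemma setLIntegral_orderedRegion_succ {f : (Fin (K + 2) → ℝ) → ℝ≥0∞} (hf : Measurable f)
    (t T : ℝ) :
    ∫⁻ z in orderedRegion (K + 1) t T, f z
      = ∫⁻ x in Set.Ioi t, ∫⁻ y in orderedRegion K x T, f (Matrix.vecCons x y) := by
  have hS := measurableSet_orderedRegion (K := K + 1) t T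
  rw [← lintegral_indicator hS, lintegral_vecCons (hf.indicator hS),
    ← lintegral_indicator measurableSet_Ioi]
  refine lintegral_congr fun x => ?_
  by_cases hx : t < x
  · rw [Set.indicator_of_mem (Set.mem_Ioi.2 hx),
      ← lintegral_indicator (measurableSet_orderedRegion x T)]
    classical
    simp only [Set.indicator_apply, vecCons_mem_orderedRegion, hx, true_and]
  · simp [Set.indicator, vecCons_mem_orderedRegion, hx]

lemma setLIntegral_orderedRegion_zero {f : (Fin 1 → ℝ) → ℝ≥0∞} (hf : Measurable f) (t T : ℝ) :
    ∫⁻ z in orderedRegion 0 t T, f z = ∫⁻ x in Set.Ioi (max t T), f fun _ => x := by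
  have mp := (volume_preserving_funUnique (Fin 1) ℝ).symm
  have preimage_eq : (MeasurableEquiv.funUnique (Fin 1) ℝ).symm ⁻¹' orderedRegion 0 t T
      = Set.Ioi (max t T) := by
    ext x
    simp [orderedRegion, strictMono_vecCons, Subsingleton.strictMono]
  rw [← preimage_eq]
  exact (mp.setLIntegral_comp_preimage (measurableSet_orderedRegion t T) hf).symm

lemma lintegral_totalTimeDensity_fin_one {g : Fin 1 → ℝ} (hg : 0 < g 0) (t T : ℝ)
    (φ : ℝ → ℝ≥0∞) :
    ∫⁻ x, ENNReal.ofReal (totalTimeDensity g (T - t) x) * φ x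
      = ∫⁻ x in Set.Ioi (max t T), φ (g 0 * (x - t)) := by
  rw [lintegral_mul_left_comp hg.ne', ← lintegral_sub_right_eq_self _ t,
    ← lintegral_const_mul' _ _ ENNReal.ofReal_ne_top, ← lintegral_indicator measurableSet_Ioi]
  refine lintegral_congr fun x => ?_
  have arg_eq : g 0 * (x - t) - max (T - t) 0 * g 0 = g 0 * (x - max t T) := by
    rw [← sub_self t, max_sub_sub_right, max_comm]
    ring
  rw [totalTimeDensity_fin_one, arg_eq]
  by_cases hx : max t T < x
  · rw [Set.indicator_of_mem (Set.mem_Ioi.2 hx), truncPow_of_pos (mul_pos hg (sub_pos.2 hx)),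
      ← mul_assoc, ← ENNReal.ofReal_mul (abs_nonneg _), abs_of_pos hg]
    simp [hg.ne']
  · rw [Set.indicator_of_notMem (mt Set.mem_Ioi.1 hx), truncPow_of_nonpos
      (mul_nonpos_of_nonneg_of_nonpos hg.le (sub_nonpos.2 (not_lt.1 hx)))]
    simp

theorem setLIntegral_totalTimeOnTest {g : Fin (K + 1) → ℝ} (hpos : ∀ s, 0 < g s)
    (hinj : Function.Injective g) (t T : ℝ) {φ : ℝ → ℝ≥0∞} (hφ : Measurable φ) :
    ∫⁻ z in orderedRegion K t T, φ (totalTimeOnTest g t z)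
      = ∫⁻ x, ENNReal.ofReal (totalTimeDensity g (T - t) x) * φ x := by
  induction K generalizing t φ with
  | zero =>
    rw [setLIntegral_orderedRegion_zero (by fun_prop), lintegral_totalTimeDensity_fin_one (hpos 0)]
    simp [totalTimeOnTest]
  | succ K ih =>
    calc
      _ = ∫⁻ x in Set.Ioi t, ∫⁻ y in orderedRegion K x T,
            φ (totalTimeOnTest (Fin.tail g) x y + g 0 * (x - t)) := by
        rw [setLIntegral_orderedRegion_succ (by fun_prop)]
        simp only [totalTimeOnTest_vecCons]
      _ = ∫⁻ x in Set.Ioi t, ∫⁻ s,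
            ENNReal.ofReal (totalTimeDensity (Fin.tail g) (T - x) s) * φ (s + g 0 * (x - t)) := by
        refine lintegral_congr fun x => ?_
        exact ih (fun s => hpos s.succ) (hinj.comp (Fin.succ_injective _)) x
          (φ := fun s => φ (s + g 0 * (x - t))) (by fun_prop)
      _ = ∫⁻ x in Set.Ioi t, ∫⁻ s,
            ENNReal.ofReal (totalTimeDensity (Fin.tail g) (T - x) (s - g 0 * (x - t))) * φ s := by
        refine lintegral_congr fun x => ?_
        rw [← lintegral_sub_right_eq_self _ (g 0 * (x - t))]
        simp only [sub_add_cancel]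
      _ = ∫⁻ s, (∫⁻ x in Set.Ioi t, ENNReal.ofReal
            (totalTimeDensity (Fin.tail g) (T - x) (s - g 0 * (x - t)))) * φ s := by
        rw [lintegral_lintegral_swap (by fun_prop)]
        exact lintegral_congr fun s => lintegral_mul_const _ (by fun_prop)
      _ = _ := by
        refine lintegral_congr fun s => ?_
        obtain ⟨integrable, integral_eq⟩ := integral_totalTimeDensity_tail hpos hinj t T s
        rw [← ofReal_integral_eq_lintegral_ofReal integrable (.of_forall fun x =>
          totalTimeDensity_nonneg (fun s => hpos s.succ) (hinj.comp (Fin.succ_injective _)) _ _),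
          integral_eq]

theorem map_totalTimeOnTest_div {g : Fin (K + 1) → ℝ} (hpos : ∀ s, 0 < g s)
    (hinj : Function.Injective g) (t T : ℝ) {c : ℝ} (hc : 0 < c) {w : ℝ → ℝ} (hw : Measurable w) :
    Measure.map (fun z => totalTimeOnTest g t z / c)
        (volume.withDensity fun z => ENNReal.ofReal
          ((orderedRegion K t T).indicator (fun z => w (totalTimeOnTest g t z)) z))
      = volume.withDensity fun x =>
          ENNReal.ofReal (c * (totalTimeDensity g (T - t) (c * x) * w (c * x))) := by
  have hS := measurableSet_orderedRegion (K := K) t T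
  have ofReal_indicator (z : Fin (K + 1) → ℝ) :
      ENNReal.ofReal ((orderedRegion K t T).indicator (fun z => w (totalTimeOnTest g t z)) z)
        = (orderedRegion K t T).indicator (fun z => ENNReal.ofReal (w (totalTimeOnTest g t z))) z :=
    (Set.indicator_comp_of_zero ENNReal.ofReal_zero).symm ▸ rfl
  simp only [ofReal_indicator]
  rw [withDensity_indicator hS]
  refine Measure.ext_of_lintegral _ fun f hf => ?_
  rw [lintegral_map hf (by fun_prop), lintegral_withDensity_eq_lintegral_mul _ (by fun_prop)
    (by fun_prop), lintegral_withDensity_eq_lintegral_mul _ (by fun_prop) hf]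
  simp only [Pi.mul_apply]
  rw [setLIntegral_totalTimeOnTest hpos hinj t T (φ := fun s => ENNReal.ofReal (w s) * f (s / c))
    (by fun_prop), lintegral_mul_left_comp hc.ne',
    ← lintegral_const_mul' _ _ ENNReal.ofReal_ne_top]
  refine lintegral_congr fun x => ?_
  rw [ENNReal.ofReal_mul hc.le, ENNReal.ofReal_mul (totalTimeDensity_nonneg hpos hinj _ _),
    abs_of_pos hc, mul_div_cancel_left₀ x hc.ne']
  ring

end OrderedRegion

section ProgressiveCensoring

lemma prod_Icc_one_eq_prod_range {M : Type*} [CommMonoid M] (f : ℕ → M) (m : ℕ) :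
    ∏ j ∈ Finset.Icc 1 m, f j = ∏ j ∈ Finset.range m, f (j + 1) := by
  simp only [← Finset.Ico_add_one_right_eq_Icc, Finset.prod_Ico_eq_prod_range,
    Nat.add_sub_cancel, add_comm 1]

lemma totalTimeCoeff_eq_div (q : ℕ → ℝ) {K l v : ℕ} (hK : l + v = K) :
    totalTimeCoeff (fun s : Fin (K + 1) => q (s + 1)) ⟨l, by omega⟩
      = (-1) ^ v / ((∏ j ∈ Finset.Icc 1 v, (q (l + 1) - q (l + 1 + j)))
          * (∏ j ∈ Finset.Icc 1 l, (q j - q (l + 1))) * q (l + 1)) := by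
  subst hK
  set factor : ℕ → ℝ := fun s => if s = l then 1 else (q (s + 1) - q (l + 1))⁻¹
  have factor_of_ne {s : ℕ} (hs : s ≠ l) : factor s = (q (s + 1) - q (l + 1))⁻¹ := if_neg hs
  have factor_self : factor l = 1 := if_pos rfl
  have weight_eq : Lagrange.nodalWeight Finset.univ
      (-fun s : Fin (l + v + 1) => q (s + 1)) ⟨l, by omega⟩
        = (∏ s ∈ Finset.range l, factor s) * ∏ j ∈ Finset.range v, factor (l + 1 + j) := by
    rw [nodalWeight_univ_eq_prod_ite]
    simp only [Pi.neg_apply, neg_sub_neg, Fin.ext_iff]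
    rw [Fin.prod_univ_eq_prod_range factor, add_right_comm, Finset.prod_range_add,
      Finset.prod_range_succ, factor_self, mul_one]
  have below : ∏ s ∈ Finset.range l, factor s = (∏ j ∈ Finset.Icc 1 l, (q j - q (l + 1)))⁻¹ := by
    rw [prod_Icc_one_eq_prod_range, ← Finset.prod_inv_distrib]
    exact Finset.prod_congr rfl fun s hs => factor_of_ne (Finset.mem_range.1 hs).ne
  have above : ∏ j ∈ Finset.range v, factor (l + 1 + j)
      = (-1) ^ v * (∏ j ∈ Finset.Icc 1 v, (q (l + 1) - q (l + 1 + j)))⁻¹ := by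
    rw [prod_Icc_one_eq_prod_range, ← Finset.prod_inv_distrib]
    nth_rw 2 [← Finset.card_range v]
    rw [← Finset.prod_const, ← Finset.prod_mul_distrib]
    refine Finset.prod_congr rfl fun j _ => ?_
    rw [factor_of_ne (by omega), neg_one_mul, ← inv_neg, neg_sub, add_assoc (l + 1)]
  rw [totalTimeCoeff, weight_eq, below, above]
  field_simp

/-- The vector `(γ_1, …, γ_{K+1})` of survivor numbers. -/
noncomputable def gamVec (n : ℕ) (R : ℕ → ℕ) (K : ℕ) : Fin (K + 1) → ℝ :=
  fun s => gam n R (s + 1)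

variable {n : ℕ} {R : ℕ → ℕ} {K : ℕ}

lemma gam_sub_gam_succ (n : ℕ) (R : ℕ → ℕ) (s : ℕ) :
    gam n R (s + 1) - gam n R (s + 2) = 1 + R (s + 1) := by
  simp only [gam, Nat.add_sub_cancel, Nat.add_succ_sub_one, Nat.cast_add,
    Finset.sum_Icc_succ_top (Nat.le_add_left 1 s)]
  push_cast
  ring

lemma strictAnti_gam (n : ℕ) (R : ℕ → ℕ) : StrictAnti fun s => gam n R (s + 1) := by
  refine strictAnti_nat_of_succ_lt fun s => sub_pos.1 ?_
  rw [gam_sub_gam_succ]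
  positivity

lemma gamVec_injective : Function.Injective (gamVec n R K) :=
  (strictAnti_gam n R).injective.comp Fin.val_injective

lemma gamVec_pos (hR : (∑ u ∈ Finset.Icc 1 K, R u) + (K + 1) ≤ n) (s : Fin (K + 1)) :
    0 < gamVec n R K s := by
  have last_pos : 0 < gam n R (K + 1) := by
    have : ((∑ u ∈ Finset.Icc 1 K, (R u : ℝ)) + (K + 1 : ℕ) : ℝ) ≤ n := by exact_mod_cast hR
    simp only [gam, Nat.add_sub_cancel]
    linarith
  exact last_pos.trans_le ((strictAnti_gam n R).antitone (Nat.le_of_lt_succ s.is_lt))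

lemma totalTimeOnTest_gamVec (z : Fin (K + 1) → ℝ) :
    totalTimeOnTest (gamVec n R K) 0 z
      = (∑ h : Fin K, z h.castSucc * (1 + (R (h + 1) : ℝ))) + z (Fin.last K) * gam n R (K + 1) := by
  have spacing_sum : ∑ s, gamVec n R K s * Matrix.vecCons 0 z s.castSucc
      = ∑ h : Fin K, gam n R (h + 2) * z h.castSucc := by
    simp [Fin.sum_univ_succ, gamVec, add_assoc]
  simp only [totalTimeOnTest, mul_sub, Finset.sum_sub_distrib, spacing_sum]
  rw [Fin.sum_univ_castSucc, add_sub_right_comm, ← Finset.sum_sub_distrib]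
  simp only [← gam_sub_gam_succ n R, gamVec, Fin.val_castSucc, Fin.val_last]
  congr 1
  · exact Finset.sum_congr rfl fun h _ => by ring
  · ring

lemma fG_eq_truncPow (K : ℕ) {c θ : ℝ} (hc : 0 < c) (hθ : θ ≠ 0) (a x : ℝ) :
    θ ^ (K + 1) * (Real.exp (-(1 / θ) * a) * fG x (a / c) (K + 1 : ℕ) (c / θ))
      = c * (truncPow K (c * x - a) * Real.exp (-(1 / θ) * (c * x))) := by
  have shift : c * x - a = c * (x - a / c) := by field_simp
  rw [fG, truncPow, shift]
  by_cases hx : a / c < x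
  · have exp_split : Real.exp (-(1 / θ) * (c * x))
        = Real.exp (-(1 / θ) * a) * Real.exp (-(c / θ) * (x - a / c)) := by
      rw [← Real.exp_add]
      congr 1
      field_simp
      ring
    rw [if_pos hx, if_pos (mul_pos hc (sub_pos.2 hx)), exp_split, Nat.cast_add_one,
      Real.Gamma_nat_eq_factorial, add_sub_cancel_right, ← Nat.cast_add_one]
    simp only [Real.rpow_natCast]
    generalize x - a / c = y
    rw [mul_pow, div_pow]
    field_simp
    ring
  · have : ¬ 0 < c * (x - a / c) := not_lt.2
      (mul_nonpos_of_nonneg_of_nonpos hc.le (sub_nonpos.2 (not_lt.1 hx)))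
    simp [if_neg hx, this]

lemma sum_fG_eq_totalTimeDensity (n : ℕ) (R : ℕ → ℕ) (K : ℕ) {c θ T : ℝ} (hc : 0 < c)
    (hθ : θ ≠ 0) (hT : 0 ≤ T) (x : ℝ) :
    θ ^ (K + 1) * ∑ v ∈ Finset.range (K + 1),
        (-1 : ℝ) ^ v * Real.exp (-(T / θ) * gam n R (K + 1 - v)) /
            ((∏ j ∈ Finset.Icc 1 v, (gam n R (K + 1 - v) - gam n R (K + 1 - v + j))) *
              (∏ j ∈ Finset.Icc 1 (K + 1 - 1 - v), (gam n R j - gam n R (K + 1 - v))) *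
              gam n R (K + 1 - v)) *
          fG x (T * gam n R (K + 1 - v) / c) (K + 1 : ℕ) (c / θ)
      = c * (totalTimeDensity (gamVec n R K) T (c * x) * Real.exp (-(1 / θ) * (c * x))) := by
  rw [totalTimeDensity, ← Equiv.sum_comp Fin.revPerm, Finset.sum_range, Finset.sum_mul,
    Finset.mul_sum, Finset.mul_sum, max_eq_left hT]
  refine Finset.sum_congr rfl fun v _ => ?_
  obtain ⟨l, hl⟩ := Nat.exists_eq_add_of_le' (Nat.le_of_lt_succ v.is_lt)
  have rev_eq : Fin.revPerm v = ⟨l, by omega⟩ := Fin.ext (by simp; omega)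
  have gamVec_rev : gamVec n R K ⟨l, by omega⟩ = gam n R (l + 1) := rfl
  have coeff_eq : totalTimeCoeff (gamVec n R K) ⟨l, by omega⟩ = _ :=
    totalTimeCoeff_eq_div (gam n R) hl.symm
  have hv : K + 1 - v = l + 1 := by omega
  have hl' : K + 1 - 1 - v = l := by omega
  have exp_eq : -(T / θ) * gam n R (l + 1) = -(1 / θ) * (T * gam n R (l + 1)) := by ring
  rw [rev_eq, gamVec_rev, hv, hl', exp_eq, coeff_eq]
  linear_combination
    ((-1) ^ (v : ℕ) / ((∏ j ∈ Finset.Icc 1 (v : ℕ), (gam n R (l + 1) - gam n R (l + 1 + j)))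
      * (∏ j ∈ Finset.Icc 1 l, (gam n R j - gam n R (l + 1))) * gam n R (l + 1)))
      * fG_eq_truncPow K hc hθ (T * gam n R (l + 1)) x

theorem conditional_density_mle_case_Zk_general (n k : ℕ) (hk : 1 ≤ k) (R : ℕ → ℕ)
    (hR : (∑ u ∈ Finset.Icc 1 (k - 1), R u) + k ≤ n)
    (θ T : ℝ) (hθ : θ ≠ 0) (hT : 0 ≤ T) (c : ℝ) (hc : 0 < c) :
    Measure.map
        (fun z : Fin k → ℝ =>
          ((∑ h : Fin (k - 1),
              z ⟨h.1, lt_of_lt_of_le h.2 (Nat.sub_le k 1)⟩ * (1 + (R (h.1 + 1) : ℝ))) +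
            z ⟨k - 1, Nat.sub_lt (by omega) Nat.one_pos⟩ * gam n R k) / c)
        (volume.withDensity fun z : Fin k → ℝ =>
          ENNReal.ofReal
            (Set.indicator
              {z : Fin k → ℝ | StrictMono z ∧ (∀ h, 0 < z h) ∧
                T < z ⟨k - 1, Nat.sub_lt (by omega) Nat.one_pos⟩}
              (fun z => Real.exp
                (-(1 / θ) * ((∑ h : Fin (k - 1),
                    z ⟨h.1, lt_of_lt_of_le h.2 (Nat.sub_le k 1)⟩ * (1 + (R (h.1 + 1) : ℝ))) +
                  z ⟨k - 1, Nat.sub_lt (by omega) Nat.one_pos⟩ * gam n R k))) z)) =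
      volume.withDensity fun x =>
        ENNReal.ofReal
          (θ ^ k * ∑ v ∈ Finset.range k,
            (-1 : ℝ) ^ v * Real.exp (-(T / θ) * gam n R (k - v)) /
                ((∏ j ∈ Finset.Icc 1 v, (gam n R (k - v) - gam n R (k - v + j))) *
                  (∏ j ∈ Finset.Icc 1 (k - 1 - v), (gam n R j - gam n R (k - v))) *
                  gam n R (k - v)) *
              fG x (T * gam n R (k - v) / c) k (c / θ)) := by
  obtain ⟨K, rfl⟩ := Nat.exists_eq_add_of_le' hk
  calc
    _ = Measure.map (fun z => totalTimeOnTest (gamVec n R K) 0 z / c)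
          (volume.withDensity fun z => ENNReal.ofReal ((orderedRegion K 0 T).indicator
            (fun z => Real.exp (-(1 / θ) * totalTimeOnTest (gamVec n R K) 0 z)) z)) := by
      simp only [totalTimeOnTest_gamVec, orderedRegion_eq]
      rfl
    _ = _ := by
      rw [map_totalTimeOnTest_div (K := K) (gamVec_pos hR) gamVec_injective 0 T hc
        (w := fun s => Real.exp (-(1 / θ) * s)) (by fun_prop), sub_zero]
      simp only [sum_fG_eq_totalTimeDensity n R K hc hθ hT]

end ProgressiveCensoring

/-- Case `T < Z_{k:m:n} < Z_{m:m:n}`: the pushforward of the (sub-probability) measure with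
density `1_{0<z₁<⋯<z_k, z_k>T} exp(−(1/θ)(Σ_{s<k} z_s(1+R_s) + z_k γ_k))` under
`g(z) = (Σ_{s<k} z_s(1+R_s) + z_k γ_k)/i` has Lebesgue density
`x ↦ θ^k Σ_{v=0}^{k−1} (−1)^v e^{−(T/θ)γ_{k−v}} / [⋯ γ_{k−v}] · f_G(x; Tγ_{k−v}/i, k, i/θ)`. -/
theorem conditional_density_mle_case_Zk (n k : ℕ) (hn : 1 ≤ n) (hk : 1 ≤ k) (R : ℕ → ℕ)
    (hR : (∑ u ∈ Finset.Icc 1 (k - 1), R u) + k ≤ n)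
    (θ T : ℝ) (hθ : 0 < θ) (hT : 0 < T)
    (i : ℕ) (hi1 : 1 ≤ i) (hik : i ≤ k) :
    Measure.map
        (fun z : Fin k → ℝ =>
          ((∑ h : Fin (k - 1),
              z ⟨h.1, lt_of_lt_of_le h.2 (Nat.sub_le k 1)⟩ * (1 + (R (h.1 + 1) : ℝ))) +
            z ⟨k - 1, Nat.sub_lt (by omega) Nat.one_pos⟩ * gam n R k) / i)
        (volume.withDensity fun z : Fin k → ℝ =>
          ENNReal.ofReal
            (Set.indicator
              {z : Fin k → ℝ | StrictMono z ∧ (∀ h, 0 < z h) ∧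
                T < z ⟨k - 1, Nat.sub_lt (by omega) Nat.one_pos⟩}
              (fun z => Real.exp
                (-(1 / θ) * ((∑ h : Fin (k - 1),
                    z ⟨h.1, lt_of_lt_of_le h.2 (Nat.sub_le k 1)⟩ * (1 + (R (h.1 + 1) : ℝ))) +
                  z ⟨k - 1, Nat.sub_lt (by omega) Nat.one_pos⟩ * gam n R k))) z)) =
      volume.withDensity fun x =>
        ENNReal.ofReal
          (θ ^ k * ∑ v ∈ Finset.range k,
            (-1 : ℝ) ^ v * Real.exp (-(T / θ) * gam n R (k - v)) /
                ((∏ j ∈ Finset.Icc 1 v, (gam n R (k - v) - gam n R (k - v + j))) *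
                  (∏ j ∈ Finset.Icc 1 (k - 1 - v), (gam n R j - gam n R (k - v))) *
                  gam n R (k - v)) *
              fG x (T * gam n R (k - v) / i) k (i / θ)) :=
  conditional_density_mle_case_Zk_general n k hk R hR θ T hθ.ne' hT.le i (by exact_mod_cast hi1)
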